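/- Let w be a nonzero vector in the Euclidean plane ℝ², let A > 0 and B > 0, and define F(q) = (‖q‖² + A)(‖q − w‖² + B) for q ∈ ℝ². Then F attains a global minimum over ℝ², and every global minimizer of F is of the form κ • w for some real number κ; that is, there exists κ ∈ ℝ with F(κ • w) ≤ F(q) for all q ∈ ℝ², and any q* satisfying F(q*) ≤ F(q) for all q must equal κ* • w for some κ* ∈ ℝ. -/

import Mathlib

/-- Dropping a nonzero component orthogonal to `w` strictly decreases the placement objective. -/
lemma placement_objective_lt_add_orthogonal {E : Type*} [NormedAddCommGroup E]
    [InnerProductSpace ℝ E] {w r : E} {A B : ℝ} (hA : 0 < A) (hB : 0 < B)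
    (hr : r ≠ 0) (hwr : inner ℝ w r = 0) (c : ℝ) :
    (‖c • w‖ ^ 2 + A) * (‖c • w - w‖ ^ 2 + B) <
      (‖c • w + r‖ ^ 2 + A) * (‖c • w + r - w‖ ^ 2 + B) := by
  have pythagoras (t : ℝ) : ‖t • w + r‖ ^ 2 = ‖t • w‖ ^ 2 + ‖r‖ ^ 2 := by
    rw [norm_add_sq_real, inner_smul_left, hwr]
    simp
  have hsub : c • w - w = (c - 1) • w := by module
  have hsub_add : c • w + r - w = (c - 1) • w + r := by module
  rw [hsub, hsub_add, pythagoras, pythagoras]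
  have hr_pos : 0 < ‖r‖ ^ 2 := by positivity
  gcongr <;> linarith

/-- Every point off the line spanned by `w` is strictly worse than some point on that line. -/
lemma exists_smul_placement_objective_lt {E : Type*} [NormedAddCommGroup E]
    [InnerProductSpace ℝ E] {w q : E} {A B : ℝ} (hw : w ≠ 0) (hA : 0 < A) (hB : 0 < B)
    (hq : ∀ c : ℝ, q ≠ c • w) :
    ∃ c : ℝ, (‖c • w‖ ^ 2 + A) * (‖c • w - w‖ ^ 2 + B) <
      (‖q‖ ^ 2 + A) * (‖q - w‖ ^ 2 + B) := by
  set c : ℝ := inner ℝ w q / ‖w‖ ^ 2 with hc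
  have horth : inner ℝ w (q - c • w) = 0 := by
    have hw_norm : ‖w‖ ≠ 0 := norm_ne_zero_iff.mpr hw
    rw [inner_sub_right, inner_smul_right, real_inner_self_eq_norm_sq, hc]
    field_simp
    ring
  refine ⟨c, ?_⟩
  simpa using placement_objective_lt_add_orthogonal hA hB (sub_ne_zero.mpr (hq c)) horth c

/-- The placement objective attains its minimum on a proper space. -/
lemma exists_forall_placement_objective_le {E : Type*} [NormedAddCommGroup E] [ProperSpace E]
    (w : E) {A B : ℝ} (hA : 0 < A) (hB : 0 < B) :
    ∃ p : E, ∀ q : E, (‖p‖ ^ 2 + A) * (‖p - w‖ ^ 2 + B) ≤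
      (‖q‖ ^ 2 + A) * (‖q - w‖ ^ 2 + B) := by
  refine Continuous.exists_forall_le (f := fun q : E => (‖q‖ ^ 2 + A) * (‖q - w‖ ^ 2 + B))
    (by fun_prop) ?_
  have hcoercive : Filter.Tendsto (fun q : E => ‖q‖ ^ 2 * B) (Filter.cocompact E) Filter.atTop :=
    ((Filter.tendsto_pow_atTop two_ne_zero).comp
      (tendsto_norm_cocompact_atTop (E := E))).atTop_mul_const hB
  refine Filter.tendsto_atTop_mono (fun q => ?_) hcoercive
  gcongr
  · linarith
  · linarith [sq_nonneg ‖q - w‖]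

/-- Structural core of Theorem 1. For `w ≠ 0`, `A, B > 0`, and
`F q = (‖q‖² + A)(‖q − w‖² + B)`, `F` attains a global minimum at a point of the
form `κ • w`, and every global minimizer lies on the line spanned by `w`. -/
theorem placement_objective_min_on_line
    (w : EuclideanSpace ℝ (Fin 2)) (hw : w ≠ 0)
    (A B : ℝ) (hA : 0 < A) (hB : 0 < B)
    (F : EuclideanSpace ℝ (Fin 2) → ℝ)
    (hF : ∀ q, F q = (‖q‖ ^ 2 + A) * (‖q - w‖ ^ 2 + B)) :
    (∃ κ : ℝ, ∀ q, F (κ • w) ≤ F q) ∧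
      (∀ qstar : EuclideanSpace ℝ (Fin 2),
        (∀ q, F qstar ≤ F q) → ∃ κstar : ℝ, qstar = κstar • w) := by
  have on_line : ∀ p, (∀ q, F p ≤ F q) → ∃ κ : ℝ, p = κ • w := by
    intro p hp
    by_contra! hline
    obtain ⟨c, hlt⟩ := exists_smul_placement_objective_lt hw hA hB hline
    rw [← hF, ← hF] at hlt
    exact (hp (c • w)).not_gt hlt
  refine ⟨?_, on_line⟩
  obtain ⟨p, hmin⟩ := exists_forall_placement_objective_le w hA hB
  simp only [← hF] at hmin
  obtain ⟨κ, rfl⟩ := on_line p hmin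
  exact ⟨κ, hmin⟩
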